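/- arXiv:2503.16002 — 2 statements merged into one kernel-verified Lean document; each statement's English description precedes it below -/
import Mathlib

section
/- There exists a delivery instance (in fact an unweighted one with three agents) together with an allocation on it that is non-wasteful but not Pareto optimal. -/
/-- A delivery instance: a finite tree rooted at the hub (encoded by a parent
function `par`; the edges of the tree are the pairs `{v, par v}` for `v ≠ hub`),
positive edge weights (`w v` is the weight of the edge between `v` and its
parent, for `v ≠ hub`), and `n` agents. -/
structure DeliveryInstance where
  V : Type
  fintypeV : Fintype V
  decEqV : DecidableEq V
  hub : V
  par : V → V
  w : V → ℝ
  par_hub : par hub = hub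
  reaches_hub : ∀ v : V, ∃ k : ℕ, par^[k] v = hub
  w_pos : ∀ v : V, v ≠ hub → 0 < w v
  n : ℕ
  n_pos : 0 < n

attribute [instance] DeliveryInstance.fintypeV DeliveryInstance.decEqV

namespace DeliveryInstance

variable (I : DeliveryInstance)

/-- `u` lies on the path from the hub to `v` (equivalently, `u` is a weak
ancestor of `v` in the tree rooted at the hub). -/
def Anc (u v : I.V) : Prop := ∃ k : ℕ, I.par^[k] v = u

/-- A leaf of the tree rooted at the hub: a vertex with no children. -/
def IsLeaf (v : I.V) : Prop := ∀ u : I.V, I.par u = v → u = v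

/-- The set of leaves of the topology. -/
def leaves : Set I.V := {v : I.V | I.IsLeaf v}

/-- The instance is unweighted if every edge has weight 1. -/
def Unweighted : Prop := ∀ v : I.V, v ≠ I.hub → I.w v = 1

/-- The cost of servicing a set `A` of orders: the total weight of the edges of
the tree that lie on the path from the hub to some vertex of `A` (the edge
between `u ≠ hub` and its parent lies on such a path iff `u` is a weak ancestor
of a member of `A`).  In particular `cost ∅ = 0`. -/
noncomputable def cost (A : Set I.V) : ℝ :=
  ∑ u : I.V, Set.indicator {u : I.V | u ≠ I.hub ∧ ∃ v ∈ A, I.Anc u v} I.w u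

/-- The bundle of agent `i` under allocation `π`: the set of orders serviced by `i`. -/
def bundle (π : I.V → Fin I.n) (i : Fin I.n) : Set I.V :=
  {v : I.V | v ≠ I.hub ∧ π v = i}

/-- An allocation is non-wasteful if every order `v` is serviced by an agent
that also services some leaf of the subtree rooted at `v`. -/
def NonWasteful (π : I.V → Fin I.n) : Prop :=
  ∀ v : I.V, v ≠ I.hub → ∃ l : I.V, I.IsLeaf l ∧ I.Anc v l ∧ π l = π v

/-- Total (utilitarian) cost of an allocation. -/
noncomputable def totalCost (π : I.V → Fin I.n) : ℝ :=
  ∑ i : Fin I.n, I.cost (I.bundle π i)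

/-- The maximum bundle cost of an allocation. -/
noncomputable def maxCost (π : I.V → Fin I.n) : ℝ :=
  Finset.univ.sup' ⟨⟨0, I.n_pos⟩, Finset.mem_univ _⟩ fun i : Fin I.n => I.cost (I.bundle π i)

/-- The minimax (MMS) share of the instance: the minimum over all allocations
of the maximum bundle cost. -/
noncomputable def MMSshare : ℝ :=
  Finset.univ.inf' ⟨fun _ => ⟨0, I.n_pos⟩, Finset.mem_univ _⟩
    fun π : I.V → Fin I.n => I.maxCost π

/-- An allocation is MMS if every bundle costs at most the MMS share. -/
def IsMMS (π : I.V → Fin I.n) : Prop :=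
  ∀ i : Fin I.n, I.cost (I.bundle π i) ≤ I.MMSshare

/-- Pareto optimality: no allocation makes every agent weakly better off and
some agent strictly better off. -/
def ParetoOptimal (π : I.V → Fin I.n) : Prop :=
  ¬ ∃ π' : I.V → Fin I.n,
      (∀ i : Fin I.n, I.cost (I.bundle π' i) ≤ I.cost (I.bundle π i)) ∧
      ∃ j : Fin I.n, I.cost (I.bundle π' j) < I.cost (I.bundle π j)

/-- Utilitarian optimality: minimizes the sum of bundle costs. -/
def UtilitarianOptimal (π : I.V → Fin I.n) : Prop :=
  ∀ π' : I.V → Fin I.n, I.totalCost π ≤ I.totalCost π'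

/-- Egalitarian optimality: minimizes the maximum bundle cost. -/
def EgalitarianOptimal (π : I.V → Fin I.n) : Prop :=
  ∀ π' : I.V → Fin I.n, I.maxCost π ≤ I.maxCost π'

/-- Envy-freeness. -/
def EF (π : I.V → Fin I.n) : Prop :=
  ∀ i j : Fin I.n, I.cost (I.bundle π i) ≤ I.cost (I.bundle π j)

/-- Envy-freeness up to one order. -/
def EF1 (π : I.V → Fin I.n) : Prop :=
  ∀ i j : Fin I.n,
    I.bundle π i = ∅ ∨ ∃ v ∈ I.bundle π i, I.cost (I.bundle π i \ {v}) ≤ I.cost (I.bundle π j)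

end DeliveryInstance

/-! If all orders but one leaf `x` go to a single agent and `x` goes to another, the costs are
`(total weight) - w x` and the distance from the hub to `x`. For `x` with a sibling this is
non-wasteful, since the first agent traverses the path to the parent of `x` anyway; but replacing
`x` by a leaf closer to the hub with an edge of the same weight helps the second agent at no cost to
the first. -/

namespace DeliveryInstance

variable {I : DeliveryInstance}

theorem anc_refl (v : I.V) : I.Anc v v := ⟨0, rfl⟩

theorem anc_iff_eq_or_anc_par {u v : I.V} : I.Anc u v ↔ u = v ∨ I.Anc u (I.par v) := by
  constructor
  · rintro ⟨_ | k, hk⟩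
    · exact Or.inl hk.symm
    · exact Or.inr ⟨k, hk⟩
  · rintro (rfl | ⟨k, hk⟩)
    · exact anc_refl u
    · exact ⟨k + 1, hk⟩

theorem Anc.trans {u v x : I.V} (huv : I.Anc u v) (hvx : I.Anc v x) : I.Anc u x := by
  obtain ⟨j, rfl⟩ := huv
  obtain ⟨k, rfl⟩ := hvx
  exact ⟨j + k, Function.iterate_add_apply I.par j k x⟩

theorem eq_hub_of_anc_hub {u : I.V} (h : I.Anc u I.hub) : u = I.hub := by
  obtain ⟨k, rfl⟩ := h
  exact Function.iterate_fixed I.par_hub k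

theorem not_anc_par {v : I.V} (hv : v ≠ I.hub) : ¬ I.Anc v (I.par v) := by
  rintro ⟨k, hk⟩
  have periodic : Function.IsPeriodicPt I.par (k + 1) v := hk
  obtain ⟨j, hj⟩ := I.reaches_hub v
  have returns : I.par^[k * j + j] v = v := by
    rw [← Nat.succ_mul]
    exact periodic.mul_const j
  have at_hub : I.par^[k * j + j] v = I.hub := by
    rw [Function.iterate_add_apply, hj, Function.iterate_fixed I.par_hub]
  exact hv (returns.symm.trans at_hub)

theorem IsLeaf.eq_of_anc {u v : I.V} (hu : I.IsLeaf u) (h : I.Anc u v) : v = u := by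
  obtain ⟨k, hk⟩ := h
  induction k generalizing v with
  | zero => exact hk
  | succ k ih => exact hu v (ih hk)

/-- The edges that an agent servicing `A` must traverse, each edge being represented by its endpoint
farther from the hub; `I.cost A` is their total weight. -/
def route (I : DeliveryInstance) (A : Set I.V) : Set I.V :=
  {u | u ≠ I.hub ∧ ∃ v ∈ A, I.Anc u v}

theorem cost_eq_finsum_route (A : Set I.V) : I.cost A = ∑ᶠ u ∈ I.route A, I.w u := by
  rw [finsum_mem_def, finsum_eq_sum_of_fintype]
  rfl

theorem route_insert {v : I.V} (hv : v ≠ I.hub) (A : Set I.V) :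
    I.route (insert v A) = insert v (I.route (insert (I.par v) A)) := by
  ext u
  simp only [route, Set.mem_ofPred_eq, Set.mem_insert_iff, exists_eq_or_imp,
    anc_iff_eq_or_anc_par (v := v)]
  grind

theorem cost_insert {v : I.V} (hv : v ≠ I.hub) {A : Set I.V} (hA : v ∉ I.route A) :
    I.cost (insert v A) = I.w v + I.cost (insert (I.par v) A) := by
  have hmem : v ∉ I.route (insert (I.par v) A) := by
    rintro ⟨-, u, rfl | hu, hvu⟩
    · exact not_anc_par hv hvu
    · exact hA ⟨hv, u, hu, hvu⟩
  rw [cost_eq_finsum_route, route_insert hv, finsum_mem_insert _ hmem (Set.toFinite _),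
    cost_eq_finsum_route]

theorem cost_insert_le {v : I.V} (hv : v ≠ I.hub) (A : Set I.V) :
    I.cost (insert v A) ≤ I.w v + I.cost (insert (I.par v) A) := by
  by_cases hA : v ∈ I.route A
  · have hmem : v ∈ I.route (insert (I.par v) A) :=
      ⟨hv, hA.2.imp fun _ h => ⟨Set.mem_insert_of_mem _ h.1, h.2⟩⟩
    rw [cost_eq_finsum_route, route_insert hv, Set.insert_eq_of_mem hmem, ← cost_eq_finsum_route]
    exact le_add_of_nonneg_left (I.w_pos v hv).le
  · exact (cost_insert hv hA).le

theorem cost_singleton_hub : I.cost {I.hub} = 0 := by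
  have hroute : I.route {I.hub} = ∅ := by
    refine Set.eq_empty_of_forall_notMem ?_
    rintro u ⟨hu, _, rfl, h⟩
    exact hu (eq_hub_of_anc_hub h)
  rw [cost_eq_finsum_route, hroute, finsum_mem_empty]

theorem cost_singleton {v : I.V} (hv : v ≠ I.hub) :
    I.cost {v} = I.w v + I.cost {I.par v} := by
  simpa only [insert_empty_eq] using
    cost_insert hv (A := ∅) fun ⟨_, _, hmem, _⟩ => hmem

theorem exists_isLeaf_anc (v : I.V) : ∃ l, I.IsLeaf l ∧ I.Anc v l := by
  -- A vertex below `v` at maximal distance `I.cost {l}` from the hub has no children.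
  obtain ⟨l, hvl, hmax⟩ :=
    Set.exists_max_image {u | I.Anc v u} (fun u => I.cost {u}) (Set.toFinite _) ⟨v, anc_refl v⟩
  refine ⟨l, fun u hul => ?_, hvl⟩
  subst hul
  by_contra hne
  have hu : u ≠ I.hub := by
    rintro rfl
    exact hne I.par_hub.symm
  have hle : I.cost {u} ≤ I.cost {I.par u} := hmax u (anc_iff_eq_or_anc_par.2 (Or.inr hvl))
  linarith [cost_singleton hu, I.w_pos u hu]

theorem exists_isLeaf_anc_ne {x s v : I.V} (hs : s ≠ I.hub) (hsx : s ≠ x)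
    (hpar : I.par s = I.par x) (hvx : v ≠ x) : ∃ l, I.IsLeaf l ∧ I.Anc v l ∧ l ≠ x := by
  obtain ⟨l, hl, hvl⟩ := exists_isLeaf_anc v
  by_cases hlx : l = x
  · subst hlx
    have hvs : I.Anc v s := by
      rw [anc_iff_eq_or_anc_par, hpar]
      exact Or.inr ((anc_iff_eq_or_anc_par.1 hvl).resolve_left hvx)
    obtain ⟨l', hl', hsl'⟩ := exists_isLeaf_anc s
    refine ⟨l', hl', hvs.trans hsl', ?_⟩
    rintro rfl
    exact not_anc_par hs (hpar ▸ (anc_iff_eq_or_anc_par.1 hsl').resolve_left hsx)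
  · exact ⟨l, hl, hvl, hlx⟩

theorem insert_par_compl_singleton {v : I.V} (hv : v ≠ I.hub) :
    insert (I.par v) ({v}ᶜ : Set I.V) = {v}ᶜ :=
  Set.insert_eq_of_mem fun h => not_anc_par hv ⟨0, h⟩

theorem cost_univ_le {v : I.V} (hv : v ≠ I.hub) :
    I.cost Set.univ ≤ I.w v + I.cost {v}ᶜ := by
  have h := cost_insert_le hv {v}ᶜ
  rwa [insert_par_compl_singleton hv, Set.insert_eq, Set.union_compl_self] at h

theorem IsLeaf.cost_univ {v : I.V} (hleaf : I.IsLeaf v) (hv : v ≠ I.hub) :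
    I.cost Set.univ = I.w v + I.cost {v}ᶜ := by
  have hroute : v ∉ I.route {v}ᶜ := fun ⟨_, _, hne, h⟩ => hne (hleaf.eq_of_anc h)
  have h := cost_insert hv hroute
  rwa [insert_par_compl_singleton hv, Set.insert_eq, Set.union_compl_self] at h

theorem cost_bundle (π : I.V → Fin I.n) (i : Fin I.n) :
    I.cost (I.bundle π i) = I.cost (π ⁻¹' {i}) := by
  have hroute : I.route (I.bundle π i) = I.route (π ⁻¹' {i}) := by
    ext u
    constructor
    · rintro ⟨hu, v, ⟨-, hvi⟩, huv⟩
      exact ⟨hu, v, hvi, huv⟩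
    · rintro ⟨hu, v, hvi, huv⟩
      exact ⟨hu, v, ⟨fun h => hu (eq_hub_of_anc_hub (h ▸ huv)), hvi⟩, huv⟩
  rw [cost_eq_finsum_route, hroute, ← cost_eq_finsum_route]

section Update

variable {a b : Fin I.n}

theorem cost_bundle_update_const_left (hab : a ≠ b) (x : I.V) :
    I.cost (I.bundle (Function.update (fun _ => a) x b) a) = I.cost {x}ᶜ := by
  rw [cost_bundle]
  congr 1
  ext v
  simp [Function.update_apply, hab.symm]

theorem cost_bundle_update_const_right (hab : a ≠ b) (x : I.V) :
    I.cost (I.bundle (Function.update (fun _ => a) x b) b) = I.cost {x} := by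
  rw [cost_bundle]
  congr 1
  ext v
  simp [Function.update_apply, hab]

theorem bundle_update_const_of_ne {i : Fin I.n} (hia : i ≠ a) (hib : i ≠ b) (x : I.V) :
    I.bundle (Function.update (fun _ => a) x b) i = ∅ := by
  ext v
  simp only [bundle, Function.update_apply, Set.mem_ofPred_eq, Set.mem_empty_iff_false]
  grind

theorem nonWasteful_update_const {x s : I.V} (hleaf : I.IsLeaf x) (hs : s ≠ I.hub) (hsx : s ≠ x)
    (hpar : I.par s = I.par x) : I.NonWasteful (Function.update (fun _ => a) x b) := by
  intro v _
  by_cases hvx : v = x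
  · subst hvx
    exact ⟨v, hleaf, anc_refl v, rfl⟩
  · obtain ⟨l, hl, hvl, hlx⟩ := exists_isLeaf_anc_ne hs hsx hpar hvx
    exact ⟨l, hl, hvl, by rw [Function.update_of_ne hlx, Function.update_of_ne hvx]⟩

theorem not_paretoOptimal_update_const (hab : a ≠ b) {x y : I.V} (hx : x ≠ I.hub)
    (hy : y ≠ I.hub) (hleaf : I.IsLeaf y) (hw : I.w x ≤ I.w y) (hlt : I.cost {y} < I.cost {x}) :
    ¬ I.ParetoOptimal (Function.update (fun _ => a) x b) := by
  have hcompl : I.cost {y}ᶜ ≤ I.cost {x}ᶜ := by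
    linarith [cost_univ_le hx, hleaf.cost_univ hy]
  refine not_not.2 ⟨Function.update (fun _ => a) y b, fun i => ?_, b, ?_⟩
  · by_cases hia : i = a
    · subst hia
      simpa only [cost_bundle_update_const_left hab] using hcompl
    by_cases hib : i = b
    · subst hib
      simpa only [cost_bundle_update_const_right hab] using hlt.le
    · rw [bundle_update_const_of_ne hia hib, bundle_update_const_of_ne hia hib]
  · simpa only [cost_bundle_update_const_right hab] using hlt

end Update

/-- The unweighted instance with `n` agents in which the hub `0` has the children `1` and `4`, and
`1` has the children `2` and `3`: the leaf `3` has a sibling, and the leaf `4` is closer to the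
hub. -/
def forkInstance (n : ℕ) (hn : 0 < n) : DeliveryInstance where
  V := Fin 5
  fintypeV := inferInstance
  decEqV := inferInstance
  hub := 0
  par := ![0, 0, 1, 1, 0]
  w := fun _ => 1
  par_hub := rfl
  reaches_hub := fun v => ⟨2, by revert v; decide⟩
  w_pos := fun _ _ => one_pos
  n := n
  n_pos := hn

section Fork

variable {n : ℕ} {hn : 0 < n}

theorem isLeaf_forkInstance_three : (forkInstance n hn).IsLeaf (3 : Fin 5) := by
  change ∀ u : Fin 5, (![0, 0, 1, 1, 0] : Fin 5 → Fin 5) u = 3 → u = 3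
  decide

theorem isLeaf_forkInstance_four : (forkInstance n hn).IsLeaf (4 : Fin 5) := by
  change ∀ u : Fin 5, (![0, 0, 1, 1, 0] : Fin 5 → Fin 5) u = 4 → u = 4
  decide

theorem forkInstance_ne_hub {v : Fin 5} (hv : v ≠ 0) : v ≠ (forkInstance n hn).hub := hv

theorem cost_forkInstance_four_lt_three :
    (forkInstance n hn).cost {(4 : Fin 5)} < (forkInstance n hn).cost {(3 : Fin 5)} := by
  have cost_four : (forkInstance n hn).cost {(4 : Fin 5)} = 1 + 0 :=
    (cost_singleton (forkInstance_ne_hub (by decide))).trans (congrArg (1 + ·) cost_singleton_hub)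
  have cost_one : (forkInstance n hn).cost {(1 : Fin 5)} = 1 + 0 :=
    (cost_singleton (forkInstance_ne_hub (by decide))).trans (congrArg (1 + ·) cost_singleton_hub)
  have cost_three : (forkInstance n hn).cost {(3 : Fin 5)} = 1 + (1 + 0) :=
    (cost_singleton (forkInstance_ne_hub (by decide))).trans (congrArg (1 + ·) cost_one)
  rw [cost_three, cost_four]
  norm_num

end Fork

end DeliveryInstance

open DeliveryInstance in
theorem stmt2_general {n : ℕ} (hn : 2 ≤ n) :
    ∃ I : DeliveryInstance, I.Unweighted ∧ I.n = n ∧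
      ∃ π : I.V → Fin I.n, I.NonWasteful π ∧ ¬ I.ParetoOptimal π := by
  have : Nontrivial (Fin n) := Fin.nontrivial_iff_two_le.2 hn
  obtain ⟨a, b, hab⟩ := exists_pair_ne (Fin n)
  refine ⟨forkInstance n (by omega), fun _ _ => rfl, rfl,
    Function.update (fun _ => a) (3 : Fin 5) b, ?_, ?_⟩
  · have sibling_ne : (2 : Fin 5) ≠ 3 := by decide
    exact nonWasteful_update_const isLeaf_forkInstance_three (forkInstance_ne_hub (by decide))
      sibling_ne rfl
  · exact not_paretoOptimal_update_const hab (forkInstance_ne_hub (by decide))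
      (forkInstance_ne_hub (by decide)) isLeaf_forkInstance_four le_rfl
      cost_forkInstance_four_lt_three

/-- There is an (unweighted, three-agent) delivery instance
with an allocation that is non-wasteful but not Pareto optimal. -/
theorem stmt2 :
    ∃ I : DeliveryInstance, I.Unweighted ∧ I.n = 3 ∧
      ∃ π : I.V → Fin I.n, I.NonWasteful π ∧ ¬ I.ParetoOptimal π :=
  stmt2_general (by norm_num)
end

section
/- Let k, B ∈ ℕ and let a_1,…,a_{2k} be positive integers with Σ_{i=1}^{2k} a_i = 2B such that every subset S ⊆ {1,…,2k} with |S| < k satisfies Σ_{i∈S} a_i < B. Let I be the delivery instance with exactly 2 agents whose topology is a star with center the hub h and with one order v_i joined to h by an edge of weight a_i for each i ∈ [2k]. Then MMS(I) ≤ B if and only if there exists S ⊆ {1,…,2k} with |S| = k and Σ_{i∈S} a_i = B. -/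
/-!
On a star, the cost of a bundle is the sum of its edge weights, so an allocation to two agents with
maximum cost at most `B` is a split of the weights into `S` and `Sᶜ`, both of weight at most `B`.
As the total weight is `2B`, both parts weigh exactly `B`; neither can then have fewer than `k` of
the `2k` elements, hence each has exactly `k`.
-/

section Partition

open Finset

variable {ι : Type*} [Fintype ι] [DecidableEq ι]

theorem exists_forall_fiber_iff_exists_compl {n : ℕ} (hn : n = 2) (P : Finset ι → Prop) :
    (∃ f : ι → Fin n, ∀ i, P {j | f j = i}) ↔ ∃ S : Finset ι, P S ∧ P Sᶜ := by
  subst hn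
  simp only [Fin.forall_fin_two]
  constructor
  · rintro ⟨f, hzero, hone⟩
    have hcompl : ({j | f j = 1} : Finset ι) = (univ.filter (f · = 0))ᶜ := by
      ext j
      simp only [mem_compl, mem_filter_univ]
      omega
    exact ⟨_, hzero, hcompl ▸ hone⟩
  · rintro ⟨S, hS, hSc⟩
    refine ⟨fun j ↦ if j ∈ S then 0 else 1, ?_, ?_⟩
    · simpa using hS
    · simpa [← compl_filter] using hSc

variable {M : Type*} [AddCommMonoid M] [PartialOrder M] {a : ι → M} {B : M}

theorem sum_le_and_sum_compl_le_iff [IsOrderedCancelAddMonoid M] (hsum : ∑ i, a i = 2 • B)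
    (S : Finset ι) :
    ∑ i ∈ S, a i ≤ B ∧ ∑ i ∈ Sᶜ, a i ≤ B ↔ ∑ i ∈ S, a i = B ∧ ∑ i ∈ Sᶜ, a i = B := by
  have htotal : ∑ i ∈ S, a i + ∑ i ∈ Sᶜ, a i = B + B := by
    rw [sum_add_sum_compl, hsum, two_nsmul]
  exact ⟨fun h ↦ (add_eq_add_iff_eq_and_eq h.1 h.2).mp htotal, fun h ↦ ⟨h.1.le, h.2.le⟩⟩

theorem card_eq_of_le_sum_of_le_sum_compl {k : ℕ} (hcard : Fintype.card ι = 2 * k)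
    (hsmall : ∀ S : Finset ι, #S < k → ∑ i ∈ S, a i < B) {S : Finset ι}
    (hS : B ≤ ∑ i ∈ S, a i) (hSc : B ≤ ∑ i ∈ Sᶜ, a i) : #S = k := by
  have hk : k ≤ #S := not_lt.mp fun h ↦ (hsmall S h).not_ge hS
  have hkc : k ≤ #Sᶜ := not_lt.mp fun h ↦ (hsmall Sᶜ h).not_ge hSc
  have := card_add_card_compl S
  omega

theorem exists_sum_le_and_sum_compl_le_iff [IsOrderedCancelAddMonoid M] {k : ℕ}
    (hcard : Fintype.card ι = 2 * k) (hsum : ∑ i, a i = 2 • B)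
    (hsmall : ∀ S : Finset ι, #S < k → ∑ i ∈ S, a i < B) :
    (∃ S : Finset ι, ∑ i ∈ S, a i ≤ B ∧ ∑ i ∈ Sᶜ, a i ≤ B) ↔
      ∃ S : Finset ι, #S = k ∧ ∑ i ∈ S, a i = B := by
  simp only [sum_le_and_sum_compl_le_iff hsum]
  constructor
  · rintro ⟨S, hS, hSc⟩
    exact ⟨S, card_eq_of_le_sum_of_le_sum_compl hcard hsmall hS.ge hSc.ge, hS⟩
  · rintro ⟨S, -, hS⟩
    refine ⟨S, hS, add_left_cancel (a := B) ?_⟩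
    rw [← two_nsmul, ← hsum, ← sum_add_sum_compl S, hS]

end Partition

namespace DeliveryInstance

variable {I : DeliveryInstance}

theorem maxCost_le_iff {π : I.V → Fin I.n} {x : ℝ} :
    I.maxCost π ≤ x ↔ ∀ i, I.cost (I.bundle π i) ≤ x :=
  (Finset.sup'_le_iff _ _).trans (by simp only [Finset.mem_univ, forall_const])

theorem MMSshare_le_iff {x : ℝ} :
    I.MMSshare ≤ x ↔ ∃ π : I.V → Fin I.n, ∀ i, I.cost (I.bundle π i) ≤ x :=
  (Finset.inf'_le_iff _).trans (by simp only [Finset.mem_univ, true_and, maxCost_le_iff])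

/-- The topology of the instance is a star centered at the hub: in the parent-function encoding,
every order is a child of the hub. -/
def IsStar (I : DeliveryInstance) : Prop := ∀ v : I.V, v ≠ I.hub → I.par v = I.hub

namespace IsStar

theorem anc_iff_eq (hI : I.IsStar) {u v : I.V} (hu : u ≠ I.hub) : I.Anc u v ↔ u = v := by
  refine ⟨?_, fun h ↦ ⟨0, h.symm⟩⟩
  rintro ⟨_ | m, hm⟩
  · exact hm.symm
  · have hpar : I.par v = I.hub := by
      by_cases hv : v = I.hub
      · rw [hv, I.par_hub]
      · exact hI v hv
    rw [Function.iterate_succ_apply, hpar, Function.iterate_fixed I.par_hub] at hm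
    exact absurd hm.symm hu

theorem cost_eq_sum_indicator (hI : I.IsStar) (A : Set I.V) :
    I.cost A = ∑ v : {v : I.V // v ≠ I.hub}, A.indicator I.w v := by
  have hedges : {u | u ≠ I.hub ∧ ∃ v ∈ A, I.Anc u v} = {u | u ≠ I.hub} ∩ A := by
    ext u
    simp +contextual [hI.anc_iff_eq]
  classical
  rw [cost, hedges]
  simp only [← Set.indicator_indicator, Set.indicator_apply {u | u ≠ I.hub}, Set.mem_ofPred_eq]
  rw [← Finset.sum_filter]
  exact Finset.sum_subtype _ (fun v ↦ Finset.mem_filter_univ v) _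

variable {ι : Type*} [Fintype ι] {a : ι → ℝ} (e : {v : I.V // v ≠ I.hub} ≃ ι)

theorem cost_bundle (hI : I.IsStar) (hw : ∀ v, I.w v.1 = a (e v)) (π : I.V → Fin I.n)
    (i : Fin I.n) : I.cost (I.bundle π i) = ∑ j with π (e.symm j) = i, a j := by
  classical
  rw [hI.cost_eq_sum_indicator, ← e.symm.sum_comp, Finset.sum_filter]
  simp [Set.indicator_apply, bundle, hw, (e.symm _).2]

theorem MMSshare_le_iff_exists_fiber_sum_le (hI : I.IsStar) (hw : ∀ v, I.w v.1 = a (e v))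
    {x : ℝ} : I.MMSshare ≤ x ↔ ∃ f : ι → Fin I.n, ∀ i, ∑ j with f j = i, a j ≤ x := by
  have : Nonempty (Fin I.n) := ⟨⟨0, I.n_pos⟩⟩
  have hinj : Function.Injective fun j ↦ (e.symm j : I.V) :=
    Subtype.val_injective.comp e.symm.injective
  simp only [MMSshare_le_iff, hI.cost_bundle e hw, hinj.surjective_comp_right.exists,
    Function.comp_apply]

end IsStar

end DeliveryInstance

theorem stmt14_general {ι : Type*} [Fintype ι] (k : ℕ) (B : ℝ) (a : ι → ℝ)
    (hcard : Fintype.card ι = 2 * k) (hsum : ∑ i, a i = 2 * B)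
    (hsmall : ∀ S : Finset ι, S.card < k → ∑ i ∈ S, a i < B)
    (I : DeliveryInstance) (h2 : I.n = 2) (e : {v : I.V // v ≠ I.hub} ≃ ι)
    (hstar : I.IsStar) (hw : ∀ v : {v : I.V // v ≠ I.hub}, I.w v.1 = a (e v)) :
    I.MMSshare ≤ B ↔ ∃ S : Finset ι, S.card = k ∧ ∑ i ∈ S, a i = B := by
  classical
  calc I.MMSshare ≤ B
      ↔ ∃ f : ι → Fin I.n, ∀ i, ∑ j with f j = i, a j ≤ B :=
        hstar.MMSshare_le_iff_exists_fiber_sum_le e hw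
    _ ↔ ∃ S : Finset ι, ∑ i ∈ S, a i ≤ B ∧ ∑ i ∈ Sᶜ, a i ≤ B :=
        exists_forall_fiber_iff_exists_compl h2 fun S ↦ ∑ i ∈ S, a i ≤ B
    _ ↔ ∃ S : Finset ι, S.card = k ∧ ∑ i ∈ S, a i = B :=
        exists_sum_le_and_sum_compl_le_iff hcard (by simpa using hsum) hsmall

/-- Let `a₁, …, a_{2k}` be positive integers summing to `2B`
such that every subset of fewer than `k` indices has sum `< B`, and let `I` be
the 2-agent instance whose topology is a star centered at the hub with one
order per `i ∈ [2k]` attached by an edge of weight `aᵢ`.  Then `MMS(I) ≤ B` iff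
there is a `k`-element subset of indices whose elements sum to `B`. -/
theorem stmt14 (k B : ℕ) (a : Fin (2 * k) → ℕ)
    (hpos : ∀ i, 0 < a i) (hsum : ∑ i, a i = 2 * B)
    (hsmall : ∀ S : Finset (Fin (2 * k)), S.card < k → ∑ i ∈ S, a i < B)
    (I : DeliveryInstance) (h2 : I.n = 2)
    (e : {v : I.V // v ≠ I.hub} ≃ Fin (2 * k))
    (hstar : ∀ v : I.V, v ≠ I.hub → I.par v = I.hub)
    (hw : ∀ v : {v : I.V // v ≠ I.hub}, I.w v.1 = (a (e v) : ℝ)) :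
    I.MMSshare ≤ (B : ℝ) ↔
      ∃ S : Finset (Fin (2 * k)), S.card = k ∧ ∑ i ∈ S, a i = B := by
  exact_mod_cast stmt14_general k B (fun i ↦ (a i : ℝ)) (Fintype.card_fin _)
    (by exact_mod_cast hsum) (by exact_mod_cast hsmall) I h2 e hstar hw
end
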